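/- arXiv:math/9905136 — 3 statements merged into one kernel-verified Lean document; each statement's English description precedes it below -/
import Mathlib

section
/- Let V be a real vector space, B : V × V → ℝ a symmetric bilinear form, and suppose V = H ⊕ J is an internal direct sum of two subspaces such that B(h, j) = 0 for all h ∈ H and j ∈ J. Then ind(B, V) = ind(B, H) + ind(B, J) (an identity in ℕ ∪ {∞}). -/
/-- The index of a (not necessarily bilinear) form `B` on the set `K`: the supremum of the
dimensions of the finite-dimensional subspaces contained in `K` on which `B` is negative
definite, as an element of `ℕ∞`. -/
noncomputable def indexOn {X : Type*} [AddCommGroup X] [Module ℝ X]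
    (B : X → X → ℝ) (K : Set X) : ℕ∞ :=
  ⨆ (U : Submodule ℝ X) (_ : (U : Set X) ⊆ K ∧ FiniteDimensional ℝ U ∧
      ∀ v ∈ U, v ≠ 0 → B v v < 0), (Module.finrank ℝ U : ℕ∞)

/-!
Write `Q` for the quadratic form of `B`. Orthogonal negative definite subspaces of `H` and `J` are
disjoint and their sum is again negative definite, which gives `≥`. For `≤`, let `U ⊆ H + J` be
finite dimensional and negative definite, and let `p : U → H` and `q : U → J` be linear with
`p u + q u = u`. Then `Q = Q ∘ p + Q ∘ q` on `U`, and the negative index of a sum of two forms on a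
finite-dimensional space is at most the sum of their negative indices: each form is nonnegative on
a subspace whose codimension is its negative index, and on the intersection of these subspaces the
sum is nonnegative.
-/

open Module QuadraticMap

section OrderedRing

variable {R M : Type*} [CommRing R] [LinearOrder R] [AddCommGroup M] [Module R M]
  {Q : QuadraticForm R M} {U W : Submodule R M}

lemma posDef_restrict_iff : (Q.restrict U).PosDef ↔ ∀ v ∈ U, v ≠ 0 → 0 < Q v := by
  simp [PosDef]

lemma posDef_neg_restrict_iff [IsOrderedAddMonoid R] :
    ((-Q).restrict U).PosDef ↔ ∀ v ∈ U, v ≠ 0 → Q v < 0 := by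
  simp [posDef_restrict_iff]

variable [IsStrictOrderedRing R]

lemma posDef_restrict_span_singleton {x : M} (hx : 0 < Q x) :
    (Q.restrict (Submodule.span R {x})).PosDef := by
  refine posDef_restrict_iff.2 fun v hv hv₀ => ?_
  obtain ⟨c, rfl⟩ := Submodule.mem_span_singleton.1 hv
  have hc : c ≠ 0 := by
    rintro rfl
    exact hv₀ (zero_smul R x)
  rw [QuadraticMap.map_smul, smul_eq_mul]
  exact mul_pos (mul_self_pos.2 hc) hx

lemma posDef_restrict_sup (hU : (Q.restrict U).PosDef) (hW : (Q.restrict W).PosDef)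
    (hUW : ∀ u ∈ U, ∀ w ∈ W, Q.IsOrtho u w) : (Q.restrict (U ⊔ W)).PosDef := by
  rw [posDef_restrict_iff] at hU hW ⊢
  intro v hv hv₀
  obtain ⟨u, hu, w, hw, rfl⟩ := Submodule.mem_sup.1 hv
  rw [isOrtho_def.1 (hUW u hu w hw)]
  rcases eq_or_ne u 0 with rfl | hu₀
  · simpa using hW w hw (by simpa using hv₀)
  · rcases eq_or_ne w 0 with rfl | hw₀
    · simpa using hU u hu hu₀
    · exact add_pos (hU u hu hu₀) (hW w hw hw₀)

lemma disjoint_of_posDef_restrict_of_isOrtho (hU : (Q.restrict U).PosDef)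
    (hUW : ∀ u ∈ U, ∀ w ∈ W, Q.IsOrtho u w) : Disjoint U W := by
  refine Submodule.disjoint_def.2 fun v hvU hvW => ?_
  by_contra hv₀
  have hpos : 0 < Q v := posDef_restrict_iff.1 hU v hvU hv₀
  have hself : 2 • Q v = 0 := by
    rw [← polar_self]
    exact (hUW v hvU v hvW).polar_eq_zero
  rw [two_nsmul] at hself
  linarith

end OrderedRing

section OrderedField

variable {𝕜 V : Type*} [Field 𝕜] [LinearOrder 𝕜] [IsStrictOrderedRing 𝕜] [AddCommGroup V]
  [Module 𝕜 V]

lemma finrank_sup_of_posDef_restrict_of_isOrtho {Q : QuadraticForm 𝕜 V} {U W : Submodule 𝕜 V}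
    [FiniteDimensional 𝕜 U] [FiniteDimensional 𝕜 W] (hU : (Q.restrict U).PosDef)
    (hUW : ∀ u ∈ U, ∀ w ∈ W, Q.IsOrtho u w) :
    finrank 𝕜 (U ⊔ W : Submodule 𝕜 V) = finrank 𝕜 U + finrank 𝕜 W := by
  rw [← Submodule.finrank_sup_add_finrank_inf_eq,
    (disjoint_of_posDef_restrict_of_isOrtho hU hUW).eq_bot, finrank_bot, add_zero]

variable [FiniteDimensional 𝕜 V]

lemma nonpos_of_isOrtho_of_finrank_eq_sigPos {Q : QuadraticForm 𝕜 V} {W : Submodule 𝕜 V}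
    (hW : (Q.restrict W).PosDef) (hdim : finrank 𝕜 W = sigPos Q) {x : V}
    (hx : ∀ w ∈ W, Q.IsOrtho w x) : Q x ≤ 0 := by
  by_contra! hpos
  have hortho : ∀ w ∈ W, ∀ y ∈ Submodule.span 𝕜 {x}, Q.IsOrtho w y := by
    intro w hw y hy
    obtain ⟨c, rfl⟩ := Submodule.mem_span_singleton.1 hy
    rw [← isOrtho_polarBilin, map_smul, isOrtho_polarBilin.2 (hx w hw), smul_zero]
  have hx₀ : x ≠ 0 := by
    rintro rfl
    simp at hpos
  have hle := le_sigPos_of_posDef Q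
    (posDef_restrict_sup hW (posDef_restrict_span_singleton hpos) hortho)
  rw [finrank_sup_of_posDef_restrict_of_isOrtho hW hortho, finrank_span_singleton hx₀] at hle
  lia

lemma exists_nonpos_and_sigPos_add_finrank_eq (Q : QuadraticForm 𝕜 V) :
    ∃ N : Submodule 𝕜 V, (∀ x ∈ N, Q x ≤ 0) ∧ sigPos Q + finrank 𝕜 N = finrank 𝕜 V := by
  obtain ⟨W, hdim, hW⟩ := exists_finrank_eq_sigPos_and_posDef Q
  let N : Submodule 𝕜 V := LinearMap.BilinForm.orthogonal Q.polarBilin W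
  have hN : ∀ x ∈ N, Q x ≤ 0 := fun x hx =>
    nonpos_of_isOrtho_of_finrank_eq_sigPos hW hdim fun w hw => isOrtho_polarBilin.1 (hx w hw)
  refine ⟨N, hN, (QuadraticForm.sigPos_add_finrank_le_of_nonpos hN).antisymm ?_⟩
  rw [← hdim, LinearMap.BilinForm.finrank_add_finrank_orthogonal']
  exact Nat.le_add_right _ _

theorem sigPos_add_le (Q₁ Q₂ : QuadraticForm 𝕜 V) :
    sigPos (Q₁ + Q₂) ≤ sigPos Q₁ + sigPos Q₂ := by
  obtain ⟨N₁, hN₁, hdim₁⟩ := exists_nonpos_and_sigPos_add_finrank_eq Q₁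
  obtain ⟨N₂, hN₂, hdim₂⟩ := exists_nonpos_and_sigPos_add_finrank_eq Q₂
  have hsum : sigPos (Q₁ + Q₂) + finrank 𝕜 (N₁ ⊓ N₂ : Submodule 𝕜 V) ≤ finrank 𝕜 V :=
    QuadraticForm.sigPos_add_finrank_le_of_nonpos fun x hx =>
      add_nonpos (hN₁ x hx.1) (hN₂ x hx.2)
  have hsup : finrank 𝕜 (N₁ ⊔ N₂ : Submodule 𝕜 V) ≤ finrank 𝕜 V := Submodule.finrank_le _
  have hinf := Submodule.finrank_sup_add_finrank_inf_eq N₁ N₂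
  lia

theorem sigNeg_add_le (Q₁ Q₂ : QuadraticForm 𝕜 V) :
    sigNeg (Q₁ + Q₂) ≤ sigNeg Q₁ + sigNeg Q₂ := by
  simpa only [← sigPos_neg, neg_add] using sigPos_add_le (-Q₁) (-Q₂)

end OrderedField

lemma exists_linearMap_add_eq_of_le_sup {R M : Type*} [Ring R] [AddCommGroup M] [Module R M]
    {U H J : Submodule R M} [Module.Projective R U] (hU : U ≤ H ⊔ J) :
    ∃ (p : U →ₗ[R] H) (q : U →ₗ[R] J), ∀ u, (p u + q u : M) = u := by
  let s : H × J →ₗ[R] M := H.subtype.coprod J.subtype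
  have hs : U ≤ LinearMap.range s := hU.trans_eq (Submodule.sup_eq_range H J)
  obtain ⟨g, hg⟩ := Module.projective_lifting_property s.rangeRestrict (Submodule.inclusion hs)
    s.surjective_rangeRestrict
  exact ⟨LinearMap.fst R H J ∘ₗ g, LinearMap.snd R H J ∘ₗ g, fun u =>
    congrArg Subtype.val (LinearMap.congr_fun hg u)⟩

section Index

variable {X : Type*} [AddCommGroup X] [Module ℝ X] {B : LinearMap.BilinForm ℝ X}

lemma finrank_le_indexOn {U : Submodule ℝ X} [hfin : FiniteDimensional ℝ U] {K : Set X}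
    (hUK : (U : Set X) ⊆ K) (hU : ((-B.toQuadraticMap).restrict U).PosDef) :
    (finrank ℝ U : ℕ∞) ≤ indexOn (fun x y => B x y) K :=
  le_iSup₂_of_le U ⟨hUK, hfin, posDef_neg_restrict_iff.1 hU⟩ le_rfl

lemma sigNeg_comp_le_indexOn {V : Type*} [AddCommGroup V] [Module ℝ V] [FiniteDimensional ℝ V]
    (f : V →ₗ[ℝ] X) {K : Set X} (hf : Set.range f ⊆ K) :
    (sigNeg (B.toQuadraticMap.comp f) : ℕ∞) ≤ indexOn (fun x y => B x y) K := by
  obtain ⟨W, hdim, hW⟩ := exists_finrank_eq_sigNeg_and_negDef (B.toQuadraticMap.comp f)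
  rw [posDef_neg_restrict_iff] at hW
  have hinj : Function.Injective (f.domRestrict W) := by
    refine (injective_iff_map_eq_zero _).2 fun w hw => ?_
    by_contra hw₀
    have hneg : B (f w) (f w) < 0 := hW w w.2 (by simpa using hw₀)
    rw [show f w = 0 from hw, map_zero] at hneg
    exact lt_irrefl 0 hneg
  rw [← hdim, ← LinearMap.finrank_range_of_inj hinj]
  refine finrank_le_indexOn ?_ (posDef_neg_restrict_iff.2 ?_)
  · rintro _ ⟨w, rfl⟩
    exact hf ⟨w, rfl⟩
  · rintro _ ⟨w, rfl⟩ hw₀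
    refine hW w w.2 fun hw => hw₀ ?_
    rw [LinearMap.domRestrict_apply, hw, map_zero]

variable {H J : Submodule ℝ X}

theorem indexOn_sup_le_indexOn_add (horth : ∀ h ∈ H, ∀ j ∈ J, B.toQuadraticMap.IsOrtho h j) :
    indexOn (fun x y => B x y) (H ⊔ J : Submodule ℝ X) ≤
      indexOn (fun x y => B x y) H + indexOn (fun x y => B x y) J := by
  refine iSup₂_le fun U ⟨hUHJ, _, hU⟩ => ?_
  obtain ⟨p, q, hpq⟩ := exists_linearMap_add_eq_of_le_sup hUHJ
  let QH := B.toQuadraticMap.comp (H.subtype ∘ₗ p)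
  let QJ := B.toQuadraticMap.comp (J.subtype ∘ₗ q)
  have hsplit : ∀ u : U, (QH + QJ) u = B u u := fun u => by
    rw [← hpq u]
    exact (isOrtho_def.1 (horth _ (p u).2 _ (q u).2)).symm
  have hneg : ((-(QH + QJ)).restrict ⊤).PosDef := posDef_neg_restrict_iff.2 fun u _ hu₀ =>
    (hsplit u).trans_lt (hU u u.2 (by simpa using hu₀))
  calc (finrank ℝ U : ℕ∞) ≤ (sigNeg QH + sigNeg QJ : ℕ) := by
        rw [← finrank_top ℝ U]
        exact_mod_cast (le_sigNeg_of_negDef _ hneg).trans (sigNeg_add_le QH QJ)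
    _ = sigNeg QH + sigNeg QJ := Nat.cast_add _ _
    _ ≤ _ := add_le_add
        (sigNeg_comp_le_indexOn _ (Set.range_subset_iff.2 fun u => (p u).2))
        (sigNeg_comp_le_indexOn _ (Set.range_subset_iff.2 fun u => (q u).2))

theorem indexOn_add_le_indexOn_sup (horth : ∀ h ∈ H, ∀ j ∈ J, B.toQuadraticMap.IsOrtho h j) :
    indexOn (fun x y => B x y) H + indexOn (fun x y => B x y) J ≤
      indexOn (fun x y => B x y) (H ⊔ J : Submodule ℝ X) := by
  have exists_negDef (K : Submodule ℝ X) : ∃ U : Submodule ℝ X, (U : Set X) ⊆ K ∧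
      FiniteDimensional ℝ U ∧ ∀ v ∈ U, v ≠ 0 → B v v < 0 :=
    ⟨⊥, by simp, inferInstance, fun v hv hv₀ => absurd ((Submodule.mem_bot ℝ).1 hv) hv₀⟩
  refine ENat.biSup_add_biSup_le' (exists_negDef H) (exists_negDef J) ?_
  rintro U ⟨hUH, _, hU⟩ W ⟨hWJ, _, hW⟩
  have hU' : ((-B.toQuadraticMap).restrict U).PosDef := posDef_neg_restrict_iff.2 hU
  have hW' : ((-B.toQuadraticMap).restrict W).PosDef := posDef_neg_restrict_iff.2 hW
  have hUW : ∀ u ∈ U, ∀ w ∈ W, (-B.toQuadraticMap).IsOrtho u w := fun u hu w hw => by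
    rw [isOrtho_def, neg_apply, isOrtho_def.1 (horth u (hUH hu) w (hWJ hw)), neg_add]
    rfl
  rw [← Nat.cast_add, ← finrank_sup_of_posDef_restrict_of_isOrtho hU' hUW]
  exact finrank_le_indexOn (SetLike.coe_subset_coe.2 (sup_le_sup hUH hWJ))
    (posDef_restrict_sup hU' hW' hUW)

end Index

theorem index_of_orthogonal_direct_sum_general {X : Type*} [AddCommGroup X] [Module ℝ X]
    (B : X →ₗ[ℝ] X →ₗ[ℝ] ℝ) (H J : Submodule ℝ X)
    (horth : ∀ h ∈ H, ∀ j ∈ J, B h j + B j h = 0) :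
    indexOn (fun x y => B x y) (H ⊔ J : Submodule ℝ X) =
      indexOn (fun x y => B x y) (H : Set X) + indexOn (fun x y => B x y) (J : Set X) := by
  have hortho : ∀ h ∈ H, ∀ j ∈ J, (LinearMap.BilinMap.toQuadraticMap B).IsOrtho h j := by
    intro h hh j hj
    rw [← isOrtho_polarBilin, polarBilin_apply_apply, LinearMap.BilinMap.polar_toQuadraticMap]
    exact horth h hh j hj
  exact (indexOn_sup_le_indexOn_add hortho).antisymm (indexOn_add_le_indexOn_sup hortho)

/-- If `X = H ⊕ J` is an internal direct sum which is orthogonal with respect to a symmetric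
bilinear form `B`, then the index of `B` on `X` is the sum of the indices of `B` on `H` and
on `J`. -/
theorem index_of_orthogonal_direct_sum {X : Type*} [AddCommGroup X] [Module ℝ X]
    (B : X →ₗ[ℝ] X →ₗ[ℝ] ℝ) (hsym : ∀ x y, B x y = B y x)
    (H J : Submodule ℝ X) (hcompl : IsCompl H J)
    (horth : ∀ h ∈ H, ∀ j ∈ J, B h j = 0) :
    indexOn (fun x y => B x y) Set.univ =
      indexOn (fun x y => B x y) (H : Set X) + indexOn (fun x y => B x y) (J : Set X) := by
  simpa only [hcompl.sup_eq_top, Submodule.top_coe] using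
    index_of_orthogonal_direct_sum_general B H J fun h hh j hj => by
      rw [hsym j h, horth h hh j hj, add_zero]
end

section
/- Let H be a real Hilbert space, B : H × H → ℝ a continuous (bounded) symmetric bilinear form, and D ⊆ H a dense subspace. Then ind(B, D) = ind(B, H): the restriction of B to the dense subspace D has the same index as B. -/
open Module Set

section PosDef

variable {R M N P : Type*} [CommSemiring R] [AddCommMonoid N] [AddCommMonoid P]
  [Module R N] [Module R P]

theorem injective_of_anisotropic_comp [AddCommGroup M] [Module R M] {Q : QuadraticMap R N P}
    {f : M →ₗ[R] N} (hQ : (Q.comp f).Anisotropic) : Function.Injective f := by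
  refine (injective_iff_map_eq_zero f).2 fun x hx => hQ x ?_
  rw [QuadraticMap.comp_apply, hx, QuadraticMap.map_zero]

variable [AddCommMonoid M] [Module R M] [PartialOrder P]

theorem posDef_comp_of_injective {Q : QuadraticMap R N P} (hQ : Q.PosDef) {f : M →ₗ[R] N}
    (hf : Function.Injective f) : (Q.comp f).PosDef :=
  fun x hx => hQ (f x) ((map_ne_zero_iff f hf).2 hx)

theorem posDef_restrict_range_of_posDef_comp {Q : QuadraticMap R N P} {f : M →ₗ[R] N}
    (hQ : (Q.comp f).PosDef) : (Q.restrict (LinearMap.range f)).PosDef := by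
  rintro ⟨_, x, rfl⟩ hx
  refine hQ x ?_
  rintro rfl
  exact hx (Subtype.ext (map_zero f))

end PosDef

theorem posDef_restrict_neg_toQuadraticMap_iff {R M : Type*} [CommRing R] [PartialOrder R]
    [IsOrderedAddMonoid R] [AddCommGroup M] [Module R M] {B : LinearMap.BilinForm R M}
    {U : Submodule R M} :
    ((-B.toQuadraticMap).restrict U).PosDef ↔ ∀ v ∈ U, v ≠ 0 → B v v < 0 := by
  simp [QuadraticMap.PosDef]

theorem posDef_iff_forall_mem_sphere {E : Type*} [NormedAddCommGroup E] [NormedSpace ℝ E]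
    {Q : QuadraticForm ℝ E} : Q.PosDef ↔ ∀ x ∈ Metric.sphere (0 : E) 1, 0 < Q x := by
  refine ⟨fun hQ x hx => hQ x (ne_zero_of_mem_unit_sphere ⟨x, hx⟩), fun hQ x hx => ?_⟩
  have hunit : 0 < Q (‖x‖⁻¹ • x) :=
    hQ _ (mem_sphere_zero_iff_norm.2 (norm_smul_inv_norm (𝕜 := ℝ) hx))
  rw [QuadraticMap.map_smul, smul_eq_mul] at hunit
  exact pos_of_mul_pos_right hunit (mul_self_nonneg _)

section Perturbation

variable {X : Type*} [AddCommGroup X] [Module ℝ X] [TopologicalSpace X] [ContinuousAdd X]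
  [ContinuousSMul ℝ X]

theorem isOpen_setOf_posDef_comp_linearCombination {ι : Type*} [Fintype ι]
    {Q : QuadraticForm ℝ X} (hQ : Continuous Q) :
    IsOpen {f : ι → X | (Q.comp (Fintype.linearCombination ℝ f)).PosDef} := by
  have hcont : Continuous fun p : (ι → X) × (ι → ℝ) =>
      Q.comp (Fintype.linearCombination ℝ p.1) p.2 := by
    simp only [QuadraticMap.comp_apply, Fintype.linearCombination_apply]
    fun_prop
  simp only [posDef_iff_forall_mem_sphere]
  refine isOpen_iff_eventually.2 fun f hf => ?_
  exact (isCompact_sphere 0 1).eventually_forall_of_forall_eventually fun c hc =>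
    hcont.continuousAt.eventually_const_lt (hf c hc)

/-- Approximate a basis of `U` by vectors of `D`: positive definiteness survives a small
perturbation, and it forces the perturbed vectors to stay linearly independent. -/
theorem exists_le_finrank_eq_posDef_restrict {Q : QuadraticForm ℝ X} (hQ : Continuous Q)
    {D U : Submodule ℝ X} [FiniteDimensional ℝ U] (hUD : (U : Set X) ⊆ closure D)
    (hU : (Q.restrict U).PosDef) :
    ∃ W ≤ D, FiniteDimensional ℝ W ∧ finrank ℝ W = finrank ℝ U ∧ (Q.restrict W).PosDef := by
  let b := finBasis ℝ U
  let e : Fin (finrank ℝ U) → X := fun i => b i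
  have he : (Q.comp (Fintype.linearCombination ℝ e)).PosDef := by
    have hcomb : Fintype.linearCombination ℝ e = U.subtype ∘ₗ b.equivFun.symm.toLinearMap := by
      ext i
      simp [e]
    rw [hcomb]
    exact posDef_comp_of_injective hU b.equivFun.symm.injective
  have heD : e ∈ closure (univ.pi fun _ => (D : Set X)) := by
    rw [closure_pi_set]
    exact fun i _ => hUD (b i).2
  obtain ⟨f, hf, hfD⟩ :=
    mem_closure_iff.1 heD _ (isOpen_setOf_posDef_comp_linearCombination hQ) he
  have hinj : Function.Injective (Fintype.linearCombination ℝ f) :=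
    injective_of_anisotropic_comp hf.anisotropic
  refine ⟨LinearMap.range (Fintype.linearCombination ℝ f), ?_, inferInstance, ?_,
    posDef_restrict_range_of_posDef_comp hf⟩
  · rw [Fintype.range_linearCombination, Submodule.span_le]
    rintro _ ⟨i, rfl⟩
    exact hfD i (mem_univ i)
  · rw [LinearMap.finrank_range_of_inj hinj, finrank_fin_fun]

end Perturbation

section Index

variable {X : Type*} [AddCommGroup X] [Module ℝ X]

theorem indexOn_mono (B : X → X → ℝ) {K L : Set X} (h : K ⊆ L) : indexOn B K ≤ indexOn B L :=
  biSup_mono fun _ hU => ⟨hU.1.trans h, hU.2⟩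

theorem index_of_dense_subspace_general [TopologicalSpace X] [ContinuousAdd X]
    [ContinuousSMul ℝ X] (B : LinearMap.BilinForm ℝ X) (hB : Continuous fun x => B x x)
    (D : Submodule ℝ X) :
    indexOn (fun x y => B x y) (D : Set X) = indexOn (fun x y => B x y) (closure (D : Set X)) := by
  refine (indexOn_mono _ subset_closure).antisymm (iSup₂_le ?_)
  rintro U ⟨hUD, hfin, hneg⟩
  obtain ⟨W, hWD, hWfin, hrank, hW⟩ := exists_le_finrank_eq_posDef_restrict
    (Q := -B.toQuadraticMap) hB.neg hUD (posDef_restrict_neg_toQuadraticMap_iff.2 hneg)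
  rw [← hrank]
  exact le_iSup₂_of_le W ⟨hWD, hWfin, posDef_restrict_neg_toQuadraticMap_iff.1 hW⟩ le_rfl

end Index

/-- A continuous symmetric bilinear form on a real Hilbert space has the same index on any
dense subspace as on the whole space. -/
theorem index_of_dense_subspace {H : Type*} [NormedAddCommGroup H] [InnerProductSpace ℝ H]
    [CompleteSpace H]
    (B : H →L[ℝ] H →L[ℝ] ℝ) (hsym : ∀ x y : H, B x y = B y x)
    (D : Submodule ℝ H) (hD : Dense (D : Set H)) :
    indexOn (fun x y => B x y) (D : Set H) = indexOn (fun x y => B x y) Set.univ := by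
  simpa only [hD.closure_eq, ContinuousLinearMap.toBilinForm_apply] using
    index_of_dense_subspace_general B.toBilinForm (B.continuous.clm_apply continuous_id) D
end

section
/- Let V be a finite-dimensional real vector space and s ↦ B_s a continuous map from ℝ to the space of symmetric bilinear forms on V. Then for every t ∈ ℝ there exists ε > 0 such that for all s with |s − t| < ε one has ind(B_t, V) ≤ ind(B_s, V) ≤ ind(B_t, V) + dim K_t, where K_t = {v ∈ V : B_t(v, w) = 0 for all w ∈ V} is the radical of B_t. -/
/-!
Positive definiteness is an open condition on quadratic forms, because it can be tested on the
compact unit sphere. Hence the positive and the negative index of inertia can only go up under a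
small perturbation. The lower bound for the index is this statement for the negative index; the
upper bound is the one for the positive index, because the two indices always sum to at most
`dim V`, and for the unperturbed form they sum to exactly `dim V` minus the dimension of the
radical.
-/

open Filter Module QuadraticMap Topology
open LinearMap.BilinMap (toQuadraticMap)

section Perturbation

variable {ι X : Type*} {l : Filter ι} [AddCommGroup X] [Module ℝ X]
  {Q : ι → QuadraticForm ℝ X} {Q₀ : QuadraticForm ℝ X}

theorem tendsto_associated_apply (hQ : ∀ x, Tendsto (Q · x) l (𝓝 (Q₀ x))) (x y : X) :
    Tendsto (fun i => associated (Q i) x y) l (𝓝 (associated Q₀ x y)) := by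
  simp only [associated_apply]
  exact (((hQ (x + y)).sub (hQ x)).sub (hQ y)).const_smul _

theorem tendsto_quadraticForm_prod_nhds [TopologicalSpace X] [IsTopologicalAddGroup X]
    [ContinuousSMul ℝ X] [T2Space X] [FiniteDimensional ℝ X]
    (hQ : ∀ x, Tendsto (Q · x) l (𝓝 (Q₀ x))) (x : X) :
    Tendsto (fun p : ι × X => Q p.1 p.2) (l ×ˢ 𝓝 x) (𝓝 (Q₀ x)) := by
  let b := finBasis ℝ X
  have expand (q : QuadraticForm ℝ X) (y : X) :
      q y = ∑ i, ∑ j, b.coord i y * (b.coord j y * associated q (b i) (b j)) := by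
    rw [← associated_eq_self_apply ℝ q y, ← LinearMap.sum_repr_mul_repr_mul b b]
    simp [Finsupp.sum_fintype]
  have coord_tendsto (i) : Tendsto (fun p : ι × X => b.coord i p.2) (l ×ˢ 𝓝 x)
      (𝓝 (b.coord i x)) :=
    ((b.coord i).continuous_of_finiteDimensional.tendsto x).comp tendsto_snd
  simp only [expand]
  exact tendsto_finsetSum _ fun i _ => tendsto_finsetSum _ fun j _ =>
    (coord_tendsto i).mul <| (coord_tendsto j).mul <|
      (tendsto_associated_apply hQ (b i) (b j)).comp tendsto_fst

theorem posDef_of_forall_mem_sphere {E : Type*} [NormedAddCommGroup E] [NormedSpace ℝ E]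
    {q : QuadraticForm ℝ E} (hq : ∀ x ∈ Metric.sphere (0 : E) 1, 0 < q x) : q.PosDef := by
  intro x hx
  have hunit : 0 < q (‖x‖⁻¹ • x) := hq _ (by simp [norm_smul, hx])
  rw [QuadraticMap.map_smul, smul_eq_mul] at hunit
  exact (mul_pos_iff_of_pos_left (by positivity)).1 hunit

theorem eventually_posDef_of_normedSpace {E : Type*} [NormedAddCommGroup E] [NormedSpace ℝ E]
    [FiniteDimensional ℝ E] {Q : ι → QuadraticForm ℝ E} {Q₀ : QuadraticForm ℝ E}
    (hQ : ∀ x, Tendsto (Q · x) l (𝓝 (Q₀ x))) (hQ₀ : Q₀.PosDef) : ∀ᶠ i in l, (Q i).PosDef := by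
  have hnear : ∀ x ∈ Metric.sphere (0 : E) 1, ∀ᶠ p in l ×ˢ 𝓝 x, 0 < Q p.1 p.2 := fun x hx =>
    (tendsto_quadraticForm_prod_nhds hQ x).eventually_const_lt
      (hQ₀ x (ne_zero_of_mem_unit_sphere ⟨x, hx⟩))
  have hsphere : ∀ᶠ p in l ×ˢ 𝓝ˢ (Metric.sphere (0 : E) 1), 0 < Q p.1 p.2 :=
    (isCompact_sphere (0 : E) 1).mem_prod_nhdsSet_of_forall hnear
  filter_upwards [hsphere.curry] with i hi
  exact posDef_of_forall_mem_sphere hi.self_of_nhdsSet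

theorem eventually_posDef [FiniteDimensional ℝ X] (hQ : ∀ x, Tendsto (Q · x) l (𝓝 (Q₀ x)))
    (hQ₀ : Q₀.PosDef) : ∀ᶠ i in l, (Q i).PosDef := by
  let e := (finBasis ℝ X).equivFun
  let _ : NormedAddCommGroup X := .induced X _ e e.injective
  let _ : NormedSpace ℝ X := .induced ℝ X _ e
  exact eventually_posDef_of_normedSpace hQ hQ₀

variable [FiniteDimensional ℝ X]

theorem eventually_sigPos_le (hQ : ∀ x, Tendsto (Q · x) l (𝓝 (Q₀ x))) :
    ∀ᶠ i in l, sigPos Q₀ ≤ sigPos (Q i) := by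
  obtain ⟨U, hU, hpos⟩ := exists_finrank_eq_sigPos_and_posDef Q₀
  have hrestrict (x : U) : Tendsto (fun i => (Q i).restrict U x) l (𝓝 (Q₀.restrict U x)) := hQ x
  filter_upwards [eventually_posDef hrestrict hpos] with i hi
  exact hU ▸ le_sigPos_of_posDef (Q i) hi

theorem eventually_sigNeg_le (hQ : ∀ x, Tendsto (Q · x) l (𝓝 (Q₀ x))) :
    ∀ᶠ i in l, sigNeg Q₀ ≤ sigNeg (Q i) :=
  eventually_sigPos_le fun x => (hQ x).neg

theorem eventually_sigNeg_le_add_finrank_radical (hQ : ∀ x, Tendsto (Q · x) l (𝓝 (Q₀ x))) :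
    ∀ᶠ i in l, sigNeg (Q i) ≤ sigNeg Q₀ + finrank ℝ Q₀.radical := by
  filter_upwards [eventually_sigPos_le hQ] with i hi
  have hsum₀ := QuadraticForm.sigPos_add_sigNeg_add_radical (Q := Q₀)
  have hsum := QuadraticForm.sigPos_add_sigNeg_add_radical (Q := Q i)
  omega

end Perturbation

theorem radical_toQuadraticMap {R M : Type*} [CommRing R] [Invertible (2 : R)] [AddCommGroup M]
    [Module R M] {B : M →ₗ[R] M →ₗ[R] R} (hB : B.IsSymm) :
    (toQuadraticMap B).radical = LinearMap.ker B := by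
  rw [radical_eq_ker_associated, associated_left_inverse R hB.eq]

theorem indexOn_univ_eq_sigNeg {X : Type*} [AddCommGroup X] [Module ℝ X] [FiniteDimensional ℝ X]
    (B : X →ₗ[ℝ] X →ₗ[ℝ] ℝ) :
    indexOn (fun x y => B x y) Set.univ = sigNeg (toQuadraticMap B) := by
  have negDef_iff (U : Submodule ℝ X) : ((-toQuadraticMap B).restrict U).PosDef ↔
      ∀ v ∈ U, v ≠ 0 → B v v < 0 := by
    simp [PosDef]
  apply le_antisymm
  · refine iSup₂_le fun U hU => ?_
    exact_mod_cast le_sigNeg_of_negDef _ ((negDef_iff U).2 hU.2.2)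
  · obtain ⟨U, hU, hneg⟩ := exists_finrank_eq_sigNeg_and_negDef (toQuadraticMap B)
    rw [← hU]
    exact le_iSup₂_of_le U ⟨Set.subset_univ _, inferInstance, (negDef_iff U).1 hneg⟩ le_rfl

theorem index_jump_bounded_by_radical_general {ι X : Type*} {l : Filter ι} [AddCommGroup X]
    [Module ℝ X] [FiniteDimensional ℝ X] {B : ι → X →ₗ[ℝ] X →ₗ[ℝ] ℝ} {B₀ : X →ₗ[ℝ] X →ₗ[ℝ] ℝ}
    (hsym : B₀.IsSymm) (hlim : ∀ x, Tendsto (fun i => B i x x) l (𝓝 (B₀ x x))) :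
    ∀ᶠ i in l,
      indexOn (fun x y => B₀ x y) Set.univ ≤ indexOn (fun x y => B i x y) Set.univ ∧
      indexOn (fun x y => B i x y) Set.univ ≤ indexOn (fun x y => B₀ x y) Set.univ +
        (finrank ℝ (LinearMap.ker B₀) : ℕ∞) := by
  have hQ : ∀ x, Tendsto (fun i => toQuadraticMap (B i) x) l (𝓝 (toQuadraticMap B₀ x)) := hlim
  simp only [indexOn_univ_eq_sigNeg]
  rw [← radical_toQuadraticMap hsym]
  filter_upwards [eventually_sigNeg_le hQ, eventually_sigNeg_le_add_finrank_radical hQ]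
    with i hlower hupper
  exact_mod_cast And.intro hlower hupper

/-- For a continuous one-parameter family `s ↦ B s` of symmetric bilinear forms on a
finite-dimensional real vector space, for every `t` and every `s` sufficiently close to `t`
one has `ind (B t) ≤ ind (B s) ≤ ind (B t) + dim (radical (B t))`. -/
theorem index_jump_bounded_by_radical {X : Type*} [AddCommGroup X] [Module ℝ X]
    [FiniteDimensional ℝ X]
    (B : ℝ → X →ₗ[ℝ] X →ₗ[ℝ] ℝ)
    (hsym : ∀ s x y, B s x y = B s y x)
    (hcont : ∀ x y : X, Continuous fun s => B s x y) :
    ∀ t : ℝ, ∃ ε > 0, ∀ s : ℝ, |s - t| < ε →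
      indexOn (fun x y => B t x y) Set.univ ≤ indexOn (fun x y => B s x y) Set.univ ∧
      indexOn (fun x y => B s x y) Set.univ ≤ indexOn (fun x y => B t x y) Set.univ +
        (Module.finrank ℝ (LinearMap.ker (B t)) : ℕ∞) :=
  fun t => Metric.eventually_nhds_iff.1 <| index_jump_bounded_by_radical_general
    (LinearMap.isSymm_def.2 (hsym t)) fun x => (hcont x x).tendsto t
end
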